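/- arXiv:2411.04514 — 2 statements merged into one kernel-verified Lean document; each statement's English description precedes it below -/
import Mathlib

section
/- Let (R, m, k) be a commutative noetherian local ring with depth(R) = 0, and let N be a pure-injective R-module of finite injective dimension. Then Ext^i_R(k, N) = 0 for all i > 0. -/
open CategoryTheory Opposite

noncomputable section

/-- Vanishing of the `n`-th Ext group of two `R`-modules. -/
def extV (R : Type) [Ring R] (M N : ModuleCat.{0} R) (n : ℕ) : Prop :=
  Subsingleton (((_root_.Ext ℤ (ModuleCat.{0} R) n).obj (op M)).obj N)

/-- The left `Ext^1`-orthogonal class. -/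
def leftPerp1 (R : Type) [Ring R] (𝒳 : Set (ModuleCat.{0} R)) : Set (ModuleCat.{0} R) :=
  {M | ∀ X ∈ 𝒳, extV R M X 1}

/-- The right `Ext^1`-orthogonal class. -/
def rightPerp1 (R : Type) [Ring R] (𝒳 : Set (ModuleCat.{0} R)) : Set (ModuleCat.{0} R) :=
  {N | ∀ X ∈ 𝒳, extV R X N 1}

/-- `(𝒞, 𝒲)` is a cotorsion pair. -/
def IsCotorsionPair (R : Type) [Ring R] (𝒞 𝒲 : Set (ModuleCat.{0} R)) : Prop :=
  𝒞 = leftPerp1 R 𝒲 ∧ 𝒲 = rightPerp1 R 𝒞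

/-- `(𝒞, 𝒲)` is a hereditary cotorsion pair. -/
def IsHereditaryCotorsionPair (R : Type) [Ring R] (𝒞 𝒲 : Set (ModuleCat.{0} R)) : Prop :=
  IsCotorsionPair R 𝒞 𝒲 ∧ ∀ X ∈ 𝒞, ∀ Y ∈ 𝒲, ∀ i : ℕ, 1 ≤ i → extV R X Y i

/-- The class `𝒞_(i) = {M ∣ Ext^j(M, W) = 0 for all j > i and all W ∈ 𝒲}`. -/
def cotShift (R : Type) [Ring R] (𝒲 : Set (ModuleCat.{0} R)) (i : ℕ) : Set (ModuleCat.{0} R) :=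
  {M | ∀ Y ∈ 𝒲, ∀ j : ℕ, i < j → extV R M Y j}

/-- `f : A →ₗ[R] B` is a pure monomorphism. -/
def IsPureMono (R : Type) [CommRing R] {A B : Type} [AddCommGroup A] [Module R A]
    [AddCommGroup B] [Module R B] (f : A →ₗ[R] B) : Prop :=
  Function.Injective f ∧
    ∀ (Q : Type) [AddCommGroup Q] [Module R Q], Function.Injective (LinearMap.lTensor Q f)

/-- An `R`-module `N` is pure-injective if it is injective with respect to
pure monomorphisms. -/
def PureInjective (R : Type) [CommRing R] (N : Type) [AddCommGroup N] [Module R N] : Prop :=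
  ∀ (A B : Type) [AddCommGroup A] [Module R A] [AddCommGroup B] [Module R B]
    (f : A →ₗ[R] B), IsPureMono R f → ∀ g : A →ₗ[R] N, ∃ h : B →ₗ[R] N, h.comp f = g

/-- `N` has injective dimension at most `n`: all Ext-groups above degree `n` vanish. -/
def injDimLE (R : Type) [Ring R] (N : ModuleCat.{0} R) (n : ℕ) : Prop :=
  ∀ M : ModuleCat.{0} R, ∀ j : ℕ, n < j → extV R M N j

/-- The class of pure-injective `R`-modules of finite injective dimension. -/
def PIFinInj (R : Type) [CommRing R] : Set (ModuleCat.{0} R) :=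
  {N | PureInjective R ↥N ∧ ∃ n : ℕ, injDimLE R N n}

/-- The depth of a module over a commutative noetherian local ring, as the infimum of
the degrees in which `Ext(k, M)` does not vanish (`⊤` if all vanish). -/
def rdepth (A : Type) [CommRing A] [IsLocalRing A] (M : Type) [AddCommGroup M]
    [Module A M] : ℕ∞ :=
  sInf {n : ℕ∞ | ∃ i : ℕ, n = (i : ℕ∞) ∧
    ¬ extV A (ModuleCat.of A (IsLocalRing.ResidueField A)) (ModuleCat.of A M) i}

/-- The residue field `k(p)` of `R_p`, as an `R`-module. -/
abbrev resField (R : Type) [CommRing R] (p : PrimeSpectrum R) : Type :=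
  LocalizedModule p.asIdeal.primeCompl (R ⧸ p.asIdeal)

/-- `depth(R_p)`. -/
def ringDepthAt (R : Type) [CommRing R] (p : PrimeSpectrum R) : ℕ∞ :=
  rdepth (Localization.AtPrime p.asIdeal) (Localization.AtPrime p.asIdeal)

/-- `depth_{R_p}(M_p)`. -/
def depthAt (R : Type) [CommRing R] (p : PrimeSpectrum R) (M : Type) [AddCommGroup M]
    [Module R M] : ℕ∞ :=
  rdepth (Localization.AtPrime p.asIdeal) (LocalizedModule p.asIdeal.primeCompl M)

/-- `f : M →ₗ[R] E` exhibits `E` as an injective envelope of `M`: `E` is injective and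
`f` is an essential monomorphism. -/
def IsInjectiveEnvelope (R : Type) [Ring R] {M E : Type} [AddCommGroup M] [Module R M]
    [AddCommGroup E] [Module R E] (f : M →ₗ[R] E) : Prop :=
  Module.Injective R E ∧ Function.Injective f ∧
    ∀ K : Submodule R E, K ≠ ⊥ → K ⊓ LinearMap.range f ≠ ⊥


open CategoryTheory.Abelian in
lemma bridge {R : Type} [CommRing R] (M N : ModuleCat.{0} R) (n : ℕ) :
    extV R M N (n+1) ↔ Subsingleton (Ext M N (n+1)) := by
  let P := ProjectiveResolution.of M
  have h1 : extV R M N (n+1) ↔ (P.complex.linearYonedaObj ℤ N).ExactAt (n+1) := by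
    rw [HomologicalComplex.exactAt_iff_isZero_homology]
    refine ⟨fun h => ?_, fun h => ?_⟩
    · have h' : Subsingleton (((_root_.Ext ℤ (ModuleCat.{0} R) (n+1)).obj (op M)).obj N) := h
      exact (ModuleCat.isZero_of_subsingleton _).of_iso (P.isoExt (R := ℤ) (n+1) N).symm
    · exact ModuleCat.subsingleton_of_isZero (h.of_iso (P.isoExt (R := ℤ) (n+1) N))
  rw [h1, HomologicalComplex.exactAt_iff' _ n (n+1) (n+1+1) (by simp) (by simp),
    ShortComplex.moduleCat_exact_iff]
  constructor
  · intro h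
    refine subsingleton_of_forall_eq 0 fun e => ?_
    obtain ⟨f, hf, rfl⟩ := P.extMk_surjective e (n+1+1) rfl
    rw [P.extMk_eq_zero_iff _ _ _ _ n rfl]
    exact h f hf
  · intro h f hf
    exact (P.extMk_eq_zero_iff f (n+1+1) rfl hf n rfl).1 (Subsingleton.elim _ _)

lemma bridge0 {R : Type} [CommRing R] (M N : ModuleCat.{0} R) (h : ∀ f : M ⟶ N, f = 0) :
    extV R M N 0 := by
  let P := ProjectiveResolution.of M
  have h1 : (P.complex.linearYonedaObj ℤ N).ExactAt 0 := by
    rw [HomologicalComplex.exactAt_iff' _ 0 0 1 (by simp) (by simp),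
      ShortComplex.moduleCat_exact_iff]
    intro f hf
    change P.complex.X 0 ⟶ N at f
    change P.complex.d 1 0 ≫ f = 0 at hf
    refine ⟨(0 : P.complex.X 0 ⟶ N), ?_⟩
    refine (map_zero (HomologicalComplex.sc' (P.complex.linearYonedaObj ℤ N) 0 0 1).f.hom).trans ?_
    have h2 := P.exact₀.g_desc f hf
    rw [h (P.exact₀.desc f hf)] at h2
    exact (h2.symm.trans Limits.comp_zero).symm
  rw [HomologicalComplex.exactAt_iff_isZero_homology] at h1
  exact ModuleCat.subsingleton_of_isZero (h1.of_iso (P.isoExt (R := ℤ) 0 N))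


open CategoryTheory.Abelian

/-- vanishing of the modern Ext -/
def VV (R : Type) [CommRing R] (N : Type) [AddCommGroup N] [Module R N]
    (M : Type) [AddCommGroup M] [Module R M] (l : ℕ) : Prop :=
  Subsingleton (Abelian.Ext (ModuleCat.of R M) (ModuleCat.of R N) l)

section
variable {R : Type} [CommRing R] {N : Type} [AddCommGroup N] [Module R N]
  {A B C : Type} [AddCommGroup A] [Module R A] [AddCommGroup B] [Module R B]
  [AddCommGroup C] [Module R C]

lemma ses (f : A →ₗ[R] B) (g : B →ₗ[R] C) (hf : Function.Injective f)
    (hg : Function.Surjective g) (h : Function.Exact f g) :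
    (ModuleCat.shortComplexOfCompEqZero f g h.linearMap_comp_eq_zero).ShortExact :=
  ModuleCat.shortComplex_shortExact _ h hf hg

lemma VV.mid {f : A →ₗ[R] B} {g : B →ₗ[R] C} (hf : Function.Injective f)
    (hg : Function.Surjective g) (h : Function.Exact f g) {l : ℕ}
    (h1 : VV R N A l) (h3 : VV R N C l) : VV R N B l := by
  refine subsingleton_of_forall_eq 0 fun e => ?_
  have h1' : Subsingleton (Abelian.Ext (ModuleCat.of R A) (ModuleCat.of R N) l) := h1
  have h3' : Subsingleton (Abelian.Ext (ModuleCat.of R C) (ModuleCat.of R N) l) := h3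
  obtain ⟨x, hx⟩ := Ext.contravariant_sequence_exact₂ (ses f g hf hg h) _ e (h1'.elim _ _)
  rw [← hx, h3'.elim x 0, Ext.comp_zero]

lemma VV.left {f : A →ₗ[R] B} {g : B →ₗ[R] C} (hf : Function.Injective f)
    (hg : Function.Surjective g) (h : Function.Exact f g) {l : ℕ}
    (h2 : VV R N B l) (h3 : VV R N C (l + 1)) : VV R N A l := by
  refine subsingleton_of_forall_eq 0 fun e => ?_
  have h2' : Subsingleton (Abelian.Ext (ModuleCat.of R B) (ModuleCat.of R N) l) := h2
  have h3' : Subsingleton (Abelian.Ext (ModuleCat.of R C) (ModuleCat.of R N) (l + 1)) := h3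
  obtain ⟨x, hx⟩ := Ext.contravariant_sequence_exact₁ (ses f g hf hg h) _ e
    (n₁ := l + 1) (by omega) (h3'.elim _ _)
  rw [← hx, h2'.elim x 0, Ext.comp_zero]

lemma VV.proj [Module.Projective R A] (l : ℕ) : VV R N A (l + 1) := by
  have : Projective (ModuleCat.of R A) := (IsProjective.iff_projective A).1 inferInstance
  exact subsingleton_of_forall_eq 0 fun e => Ext.eq_zero_of_projective e

lemma VV.retract (s : A →ₗ[R] B) (r : B →ₗ[R] A) (h : r ∘ₗ s = LinearMap.id) {l : ℕ}
    (hB : VV R N B l) : VV R N A l := by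
  refine subsingleton_of_forall_eq 0 fun e => ?_
  have hB' : Subsingleton (Abelian.Ext (ModuleCat.of R B) (ModuleCat.of R N) l) := hB
  have h0 : ModuleCat.ofHom s ≫ ModuleCat.ofHom r = 𝟙 (ModuleCat.of R A) := by
    rw [← ModuleCat.ofHom_comp, h]; rfl
  rw [← Ext.mk₀_id_comp e, ← h0, ← Ext.mk₀_comp_mk₀_assoc,
    hB'.elim ((Ext.mk₀ (ModuleCat.ofHom r)).comp e (zero_add l)) 0, Ext.comp_zero]

lemma VV.pi {l : ℕ} (h : VV R N A (l + 1)) (n : ℕ) : VV R N (Fin n → A) (l + 1) := by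
  induction n with
  | zero => exact VV.proj l
  | succ n ih =>
    refine VV.mid (f := LinearMap.single R (fun _ : Fin (n + 1) => A) 0)
      (g := LinearMap.funLeft R A Fin.succ) (Pi.single_injective (M := fun _ : Fin (n + 1) => A) 0)
      (LinearMap.funLeft_surjective_of_injective R A _ (Fin.succ_injective n)) ?_ h ih
    intro x
    constructor
    · intro hx
      refine ⟨x 0, ?_⟩
      ext i
      refine Fin.cases (by simp) (fun j => ?_) i
      have := congrFun hx j
      simpa [LinearMap.funLeft, Fin.succ_ne_zero] using this.symm
    · rintro ⟨y, rfl⟩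
      ext j
      simp [LinearMap.funLeft, Fin.succ_ne_zero]

/-- positive Ext into `R` is killed by the ideal -/
def KK (R : Type) [CommRing R] (I : Ideal R) (X : Type) [AddCommGroup X] [Module R X] : Prop :=
  ∀ j : ℕ, ∀ e : Abelian.Ext (ModuleCat.of R X) (ModuleCat.of R R) (j + 1), ∀ x ∈ I, x • e = 0

lemma KK.of_torsion (I : Ideal R) (h : ∀ x ∈ I, ∀ a : A, x • a = 0) : KK R I A := by
  intro j e x hx
  have h0 : x • 𝟙 (ModuleCat.of R A) = 0 := by
    ext a; exact h x hx a
  rw [← Ext.mk₀_id_comp e, ← Ext.smul_comp, ← Ext.mk₀_smul, h0, Ext.mk₀_zero, Ext.zero_comp]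

lemma KK.syz {I : Ideal R} {f : A →ₗ[R] B} {g : B →ₗ[R] C} (hf : Function.Injective f)
    (hg : Function.Surjective g) (h : Function.Exact f g) [Module.Projective R B]
    (hC : KK R I C) : KK R I A := by
  intro j e x hx
  have h2 : Subsingleton (Abelian.Ext (ModuleCat.of R B) (ModuleCat.of R R) (j + 1)) := VV.proj j
  obtain ⟨y, hy⟩ := Ext.contravariant_sequence_exact₁ (ses f g hf hg h) _ (x • e)
    (n₁ := j + 1 + 1) (by omega) (by rw [Ext.comp_smul]; exact hC _ _ x hx)
  rw [← hy, h2.elim y 0, Ext.comp_zero]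

lemma KK.extend {I : Ideal R} {f : A →ₗ[R] B} {g : B →ₗ[R] C} (hf : Function.Injective f)
    (hg : Function.Surjective g) (h : Function.Exact f g)
    (hC : KK R I C) (u : A →ₗ[R] R) (x : R) (hx : x ∈ I) : ∃ v : B →ₗ[R] R, v ∘ₗ f = x • u := by
  obtain ⟨y, hy⟩ := Ext.contravariant_sequence_exact₁ (ses f g hf hg h) (ModuleCat.of R R)
    (x • Ext.mk₀ (ModuleCat.ofHom u))
    (n₁ := 0 + 1) (by omega) (by rw [Ext.comp_smul]; exact hC _ _ x hx)
  obtain ⟨v, rfl⟩ := Ext.addEquiv₀.symm.surjective y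
  refine ⟨v.hom, ?_⟩
  rw [Ext.addEquiv₀_symm_apply, Ext.mk₀_comp_mk₀, ← Ext.mk₀_smul] at hy
  have := Ext.addEquiv₀.symm.injective (a₁ := _ ≫ v) hy
  exact congrArg ModuleCat.Hom.hom this

end

section
variable {R : Type} [CommRing R] [IsNoetherianRing R] [IsLocalRing R]
  {N : Type} [AddCommGroup N] [Module R N]
open IsLocalRing

lemma vec (H : Type) [AddCommGroup H] [Module R H] [Module.Finite R H]
    (h : ∀ x ∈ maximalIdeal R, ∀ a : H, x • a = 0) :
    ∃ n, Nonempty (H ≃ₗ[R] (Fin n → ResidueField R)) := by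
  have ht : Module.IsTorsionBySet R H (maximalIdeal R : Set R) := fun a x => h x.1 x.2 a
  let _ : Module (ResidueField R) H := ht.module
  have : IsScalarTower R (ResidueField R) H := ht.isScalarTower
  have : Module.Finite (ResidueField R) H := Module.Finite.of_restrictScalars_finite R _ H
  exact ⟨_, ⟨(Module.finBasis (ResidueField R) H).equivFun.restrictScalars R⟩⟩

lemma VV.vec {l : ℕ} (hk : VV R N (ResidueField R) (l + 1))
    (H : Type) [AddCommGroup H] [Module R H] [Module.Finite R H]
    (h : ∀ x ∈ maximalIdeal R, ∀ a : H, x • a = 0) : VV R N H (l + 1) := by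
  obtain ⟨n, ⟨e⟩⟩ := _root_.vec H h
  exact VV.retract e.toLinearMap e.symm.toLinearMap (by ext; simp) (VV.pi hk n)

lemma step (n i : ℕ) (hn : ∀ (M : Type) [AddCommGroup M] [Module R M], ∀ l, n < l → VV R N M l)
    (hk : ∀ j, i < j → VV R N (ResidueField R) j) (t : ℕ) :
    ∀ (P₁ P₀ X : Type) [AddCommGroup P₁] [Module R P₁] [AddCommGroup P₀] [Module R P₀]
      [AddCommGroup X] [Module R X] [Module.Free R P₁] [Module.Finite R P₁]
      [Module.Free R P₀] [Module.Finite R P₀] (d : P₁ →ₗ[R] P₀) (g : P₀ →ₗ[R] X)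
      (_ : Function.Surjective g) (_ : Function.Exact d g) (_ : KK R (maximalIdeal R) X)
      (l : ℕ), i < l → n < l + t → VV R N (Module.Dual R P₁ ⧸ LinearMap.range d.dualMap) l := by
  induction t with
  | zero => intro P₁ P₀ X _ _ _ _ _ _ _ _ _ _ d g hg hd hX l hl hl'; exact hn _ _ hl'
  | succ t ih =>
    intro P₁ P₀ X _ _ _ _ _ _ _ _ _ _ d g hg hd hX l hl hl'
    obtain ⟨l, rfl⟩ : ∃ l', l = l' + 1 := ⟨l - 1, by omega⟩
    obtain ⟨r, p, hp⟩ := Module.Finite.exists_fin' R (LinearMap.ker d)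
    let d₂ : (Fin r → R) →ₗ[R] P₁ := (LinearMap.ker d).subtype ∘ₗ p
    have hr : LinearMap.range d₂ = LinearMap.ker d := by
      rw [LinearMap.range_comp, LinearMap.range_eq_top.2 hp, Submodule.map_top,
        Submodule.range_subtype]
    have hexd : Function.Exact (LinearMap.range d).subtype g := by
      intro x; rw [hd x]; simp
    have hX' : KK R (maximalIdeal R) (LinearMap.range d) :=
      KK.syz (Submodule.subtype_injective _) hg hexd hX
    have hC' := ih (Fin r → R) P₁ (LinearMap.range d) d₂ d.rangeRestrict
      d.surjective_rangeRestrict (by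
        rw [LinearMap.exact_iff, LinearMap.ker_rangeRestrict, hr]) hX' (l + 1 + 1)
        (by omega) (by omega)
    have hle : LinearMap.range d.dualMap ≤ LinearMap.ker d₂.dualMap := by
      rintro _ ⟨f, rfl⟩
      rw [LinearMap.mem_ker]
      ext y
      have : d (d₂ (Pi.single y 1)) = 0 := (p (Pi.single y 1)).2
      simp [this]
    let φ := (LinearMap.range d.dualMap).liftQ d₂.dualMap hle
    have hφ : LinearMap.range φ = LinearMap.range d₂.dualMap := Submodule.range_liftQ _ _ _
    have hB : VV R N (LinearMap.range φ) (l + 1) := by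
      refine VV.left (f := (LinearMap.range φ).subtype)
        (g := (LinearMap.range d₂.dualMap).mkQ) (Submodule.subtype_injective _)
        (Submodule.mkQ_surjective _) ?_ (VV.proj l) hC'
      rw [LinearMap.exact_iff, Submodule.ker_mkQ, Submodule.range_subtype, hφ]
    have hH : VV R N (LinearMap.ker φ) (l + 1) := by
      refine VV.vec (hk _ hl) _ ?_
      rintro x hx ⟨c, hc⟩
      obtain ⟨f, rfl⟩ := Submodule.mkQ_surjective _ c
      ext
      have hf : ∀ y ∈ LinearMap.ker d, f y = 0 := by
        intro y hy
        obtain ⟨z, hz⟩ := hp ⟨y, hy⟩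
        have h1 : d₂.dualMap f = 0 := by simpa [φ] using hc
        have h2 := LinearMap.congr_fun h1 z
        simpa [d₂, hz] using h2
      let u : LinearMap.range d →ₗ[R] R :=
        (LinearMap.ker d).liftQ f hf ∘ₗ d.quotKerEquivRange.symm.toLinearMap
      have hu : ∀ y, u (d.rangeRestrict y) = f y := by
        intro y
        have : d.quotKerEquivRange.symm (d.rangeRestrict y) = (LinearMap.ker d).mkQ y := by
          rw [LinearEquiv.symm_apply_eq]; rfl
        change (LinearMap.ker d).liftQ f hf (d.quotKerEquivRange.symm (d.rangeRestrict y)) = _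
        rw [this]; rfl
      obtain ⟨v, hv⟩ := KK.extend (Submodule.subtype_injective _) hg hexd hX u x hx
      change x • (LinearMap.range d.dualMap).mkQ f = 0
      rw [← map_smul, Submodule.mkQ_apply, Submodule.Quotient.mk_eq_zero]
      refine ⟨v, ?_⟩
      ext y
      have := LinearMap.congr_fun hv (d.rangeRestrict y)
      simpa [hu] using this
    refine VV.mid (f := (LinearMap.ker φ).subtype) (g := φ.rangeRestrict)
      (Submodule.subtype_injective _) φ.surjective_rangeRestrict ?_ hH hB
    rw [LinearMap.exact_iff, LinearMap.ker_rangeRestrict, Submodule.range_subtype]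

lemma key (n i : ℕ) (hn : ∀ (M : Type) [AddCommGroup M] [Module R M], ∀ l, n < l → VV R N M l)
    (hk : ∀ j, i + 1 < j → VV R N (ResidueField R) j)
    (φ : ResidueField R →ₗ[R] R) (hφ : φ ≠ 0) : VV R N (ResidueField R) (i + 1) := by
  obtain ⟨r, p, hp⟩ := Module.Finite.exists_fin' R (maximalIdeal R)
  let d : (Fin r → R) →ₗ[R] R := (maximalIdeal R).subtype ∘ₗ p
  have hr : LinearMap.range d = maximalIdeal R := by
    rw [LinearMap.range_comp, LinearMap.range_eq_top.2 hp, Submodule.map_top,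
      Submodule.range_subtype]
  have hkx : ∀ x ∈ maximalIdeal R, ∀ a : ResidueField R, x • a = 0 := by
    intro x hx a
    rw [Algebra.smul_def, ResidueField.algebraMap_eq, (residue_eq_zero_iff x).2 hx, zero_mul]
  have hC := step n (i + 1) hn hk n (Fin r → R) R (ResidueField R) d
    (Algebra.linearMap R (ResidueField R)) residue_surjective (by
      intro x
      change residue R x = 0 ↔ x ∈ LinearMap.range d
      rw [hr, residue_eq_zero_iff]) (KK.of_torsion _ hkx) (i + 1 + 1 + 1) (by omega) (by omega)
  have hB' : VV R N (LinearMap.range d.dualMap) (i + 1 + 1) := by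
    refine VV.left (f := (LinearMap.range d.dualMap).subtype)
      (g := (LinearMap.range d.dualMap).mkQ) (Submodule.subtype_injective _)
      (Submodule.mkQ_surjective _) ?_ (VV.proj (i + 1)) hC
    rw [LinearMap.exact_iff, Submodule.ker_mkQ, Submodule.range_subtype]
  have hH : VV R N (LinearMap.ker d.dualMap) (i + 1) := by
    refine VV.left (f := (LinearMap.ker d.dualMap).subtype) (g := d.dualMap.rangeRestrict)
      (Submodule.subtype_injective _) d.dualMap.surjective_rangeRestrict ?_ (VV.proj i) hB'
    rw [LinearMap.exact_iff, LinearMap.ker_rangeRestrict, Submodule.range_subtype]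
  have hmem : ∀ f : Module.Dual R R, f ∈ LinearMap.ker d.dualMap ↔
      ∀ x ∈ maximalIdeal R, f x = 0 := by
    intro f
    rw [LinearMap.mem_ker]
    constructor
    · intro h x hx
      rw [← hr] at hx
      obtain ⟨y, rfl⟩ := hx
      exact LinearMap.congr_fun h y
    · intro h
      refine LinearMap.ext fun y => h _ ?_
      rw [← hr]; exact ⟨y, rfl⟩
  obtain ⟨m, ⟨e⟩⟩ := vec (LinearMap.ker d.dualMap) (by
    rintro x hx ⟨f, hf⟩
    ext
    have := (hmem f).1 hf x hx
    have h1 : f x = x * f 1 := by rw [← smul_eq_mul, ← map_smul, smul_eq_mul, mul_one]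
    simpa [← h1] using this)
  have hm : 0 < m := by
    rcases Nat.eq_zero_or_pos m with rfl | h
    · exfalso
      apply hφ
      have hs : Subsingleton (LinearMap.ker d.dualMap) := e.toEquiv.subsingleton
      have hmm : φ ∘ₗ Algebra.linearMap R (ResidueField R) ∈ LinearMap.ker d.dualMap := by
        rw [hmem]
        intro x hx
        change φ (residue R x) = 0
        rw [(residue_eq_zero_iff x).2 hx, map_zero]
      have h0 := congrArg Subtype.val (hs.elim ⟨_, hmm⟩ 0)
      ext y
      obtain ⟨y, rfl⟩ := residue_surjective y
      exact LinearMap.congr_fun h0 y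
    · exact h
  refine VV.retract (e.symm.toLinearMap ∘ₗ LinearMap.single R (fun _ => ResidueField R) ⟨0, hm⟩)
    (LinearMap.proj ⟨0, hm⟩ ∘ₗ e.toLinearMap) ?_ hH
  refine LinearMap.ext fun y => ?_
  simp

end

/-- over a commutative noetherian local ring of depth zero, every
pure-injective module `N` of finite injective dimension satisfies `Ext^i(k, N) = 0`
for all `i > 0`. -/
theorem stmt12 (R : Type) [CommRing R] [IsNoetherianRing R] [IsLocalRing R]
    (hdepth : rdepth R R = 0)
    (N : Type) [AddCommGroup N] [Module R N]
    (hpi : PureInjective R N) (hfid : ∃ n : ℕ, injDimLE R (ModuleCat.of R N) n) :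
    ∀ i : ℕ, 0 < i →
      extV R (ModuleCat.of R (IsLocalRing.ResidueField R)) (ModuleCat.of R N) i := by
  obtain ⟨n, hn⟩ := hfid
  have hn' : ∀ (M : Type) [AddCommGroup M] [Module R M], ∀ l, n < l → VV R N M l := by
    intro M _ _ l hl
    obtain ⟨l, rfl⟩ : ∃ l', l = l' + 1 := ⟨l - 1, by omega⟩
    exact (bridge _ _ _).1 (hn (ModuleCat.of R M) _ hl)
  obtain ⟨φ, hφ⟩ : ∃ φ : IsLocalRing.ResidueField R →ₗ[R] R, φ ≠ 0 := by
    by_contra! hcon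
    unfold rdepth at hdepth
    have hne : {n : ℕ∞ | ∃ i : ℕ, n = (i : ℕ∞) ∧
        ¬ extV R (ModuleCat.of R (IsLocalRing.ResidueField R)) (ModuleCat.of R R) i}.Nonempty := by
      by_contra! h
      rw [h, sInf_empty] at hdepth
      exact ENat.top_ne_zero hdepth
    have hmem := csInf_mem hne
    rw [hdepth] at hmem
    obtain ⟨i, hi, h⟩ := hmem
    obtain rfl : i = 0 := by exact_mod_cast hi.symm
    refine h (bridge0 _ _ fun f => ?_)
    exact ModuleCat.hom_ext (hcon f.hom)
  have main : ∀ s i : ℕ, n < i + 1 + s → VV R N (IsLocalRing.ResidueField R) (i + 1) := by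
    intro s
    induction s with
    | zero => intro i hi; exact hn' _ _ hi
    | succ s ih =>
      intro i hi
      refine key n i hn' (fun j hj => ?_) φ hφ
      obtain ⟨j, rfl⟩ : ∃ l', j = l' + 1 := ⟨j - 1, by omega⟩
      exact ih j (by omega)
  intro i hi
  obtain ⟨i, rfl⟩ : ∃ l', i = l' + 1 := ⟨i - 1, by omega⟩
  exact (bridge _ _ _).2 (main n i (by omega))
end
end

section
/- Let (R, m, k) be a commutative noetherian local ring and N a pure-injective R-module of finite injective dimension. Then for every prime ideal p of R, Ext^j_R(k(p), N) = 0 for every j > depth(R_p). -/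
open CategoryTheory Opposite

noncomputable section

open CategoryTheory.Abelian in
theorem extV_iff_succ (R : Type) [Ring R] (M N : ModuleCat.{0} R) (n : ℕ) :
    extV R M N (n+1) ↔ Subsingleton (Abelian.Ext.{0} M N (n+1)) := by
  let P := projectiveResolution M
  unfold extV
  rw [ModuleCat.isZero_iff_subsingleton.symm, (P.isoExt (R := ℤ) (n+1) N).isZero_iff,
    ← HomologicalComplex.exactAt_iff_isZero_homology,
    HomologicalComplex.exactAt_iff' _ n (n+1) (n+1+1) (by simp) (by simp),
    ShortComplex.moduleCat_exact_iff]
  constructor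
  · intro h
    refine subsingleton_of_forall_eq 0 fun x => ?_
    obtain ⟨f, hf, rfl⟩ := P.extMk_surjective x (n+2) rfl
    rw [P.extMk_eq_zero_iff f _ rfl hf n rfl]
    obtain ⟨g, hg⟩ := h f hf
    exact ⟨g, hg⟩
  · intro h f hf
    have := (P.extMk_eq_zero_iff f _ rfl hf n rfl).1 (Subsingleton.elim _ _)
    obtain ⟨g, hg⟩ := this
    exact ⟨g, hg⟩

theorem extV_iff_zero (R : Type) [Ring R] (M N : ModuleCat.{0} R) :
    extV R M N 0 ↔ Subsingleton (M ⟶ N) := by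
  let P := projectiveResolution M
  obtain ⟨p, hp, hz, hd⟩ : ∃ p : P.complex.X 0 ⟶ M, Epi p ∧ P.complex.d 1 0 ≫ p = 0 ∧
      ∀ f : P.complex.X 0 ⟶ N, P.complex.d 1 0 ≫ f = 0 → ∃ l : M ⟶ N, p ≫ l = f := by
    refine ⟨P.π.f 0, inferInstanceAs (Epi (P.π.f 0)), P.complex_d_comp_π_f_zero, ?_⟩
    intro f hf
    obtain ⟨l, hl⟩ := P.exact₀.desc' f hf
    exact ⟨l, hl⟩
  unfold extV
  rw [ModuleCat.isZero_iff_subsingleton.symm, (P.isoExt (R := ℤ) 0 N).isZero_iff,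
    ← HomologicalComplex.exactAt_iff_isZero_homology,
    HomologicalComplex.exactAt_iff' _ 0 0 1 (by simp) (by simp),
    ShortComplex.moduleCat_exact_iff]
  constructor
  · intro h
    refine subsingleton_of_forall_eq 0 fun x => ?_
    obtain ⟨g, hg⟩ := h (p ≫ x : P.complex.X 0 ⟶ N) (by
      change P.complex.d 1 0 ≫ p ≫ x = 0
      rw [← Category.assoc, hz, Limits.zero_comp])
    have h2 : P.complex.d 0 0 ≫ (show P.complex.X 0 ⟶ N from g) = p ≫ x := hg
    rw [P.complex.shape 0 0 (by simp), Limits.zero_comp] at h2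
    rw [← cancel_epi p, Limits.comp_zero]; exact h2.symm
  · intro h f hf
    refine ⟨(0 : P.complex.X 0 ⟶ N), ?_⟩
    obtain ⟨l, hl⟩ := hd f hf
    have : (show P.complex.X 0 ⟶ N from f) = 0 := by
      have : l = 0 := Subsingleton.elim _ _
      subst this
      rw [Limits.comp_zero] at hl
      exact hl.symm
    change P.complex.d 0 0 ≫ 0 = (show P.complex.X 0 ⟶ N from f)
    rw [this, Limits.comp_zero]

theorem extV_iff (R : Type) [Ring R] (M N : ModuleCat.{0} R) (n : ℕ) :
    extV R M N n ↔ Subsingleton (Abelian.Ext.{0} M N n) := by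
  cases n with
  | zero => rw [extV_iff_zero]; exact (Abelian.Ext.addEquiv₀).symm.toEquiv.subsingleton_congr
  | succ n => exact extV_iff_succ R M N n

section ses
open CategoryTheory.Abelian

variable {R : Type} [Ring R] {S : ShortComplex (ModuleCat.{0} R)} (hS : S.ShortExact)
  (Y : ModuleCat.{0} R)

theorem sesMid (hS : S.ShortExact) (i : ℕ) (h1 : Subsingleton (Abelian.Ext.{0} S.X₁ Y i))
    (h3 : Subsingleton (Abelian.Ext.{0} S.X₃ Y i)) : Subsingleton (Abelian.Ext.{0} S.X₂ Y i) := by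
  refine subsingleton_of_forall_eq 0 fun x => ?_
  obtain ⟨y, rfl⟩ := Abelian.Ext.contravariant_sequence_exact₂ hS Y x (Subsingleton.elim _ _)
  rw [Subsingleton.elim y 0, Abelian.Ext.comp_zero]

theorem sesSub (hS : S.ShortExact) (i : ℕ) (h1 : Subsingleton (Abelian.Ext.{0} S.X₂ Y i))
    (h3 : Subsingleton (Abelian.Ext.{0} S.X₃ Y (i+1))) :
    Subsingleton (Abelian.Ext.{0} S.X₁ Y i) := by
  refine subsingleton_of_forall_eq 0 fun x => ?_
  obtain ⟨y, rfl⟩ := Abelian.Ext.contravariant_sequence_exact₁ hS Y x (add_comm 1 i)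
    (Subsingleton.elim _ _)
  rw [Subsingleton.elim y 0, Abelian.Ext.comp_zero]

theorem sesQuot (hS : S.ShortExact) (i : ℕ) (h1 : Subsingleton (Abelian.Ext.{0} S.X₁ Y i))
    (h3 : Subsingleton (Abelian.Ext.{0} S.X₂ Y (i+1))) :
    Subsingleton (Abelian.Ext.{0} S.X₃ Y (i+1)) := by
  refine subsingleton_of_forall_eq 0 fun x => ?_
  obtain ⟨y, rfl⟩ := Abelian.Ext.contravariant_sequence_exact₃ hS Y x
    (Subsingleton.elim _ _) (add_comm 1 i)
  rw [Subsingleton.elim y 0, Abelian.Ext.comp_zero]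

theorem extRetract {X Z : ModuleCat.{0} R} (f : X ⟶ Z) (g : Z ⟶ X) (hfg : f ≫ g = 𝟙 X) (i : ℕ)
    (h : Subsingleton (Abelian.Ext.{0} Z Y i)) : Subsingleton (Abelian.Ext.{0} X Y i) := by
  refine subsingleton_of_forall_eq 0 fun x => ?_
  have h1 : (Abelian.Ext.mk₀ f).comp ((Abelian.Ext.mk₀ g).comp x (zero_add i)) (zero_add i) = x := by
    simp [hfg]
  rw [← h1, Subsingleton.elim ((Abelian.Ext.mk₀ g).comp x (zero_add i)) 0, Abelian.Ext.comp_zero]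

theorem extProj {X : ModuleCat.{0} R} [Projective X] (i : ℕ) :
    Subsingleton (Abelian.Ext.{0} X Y (i+1)) :=
  subsingleton_of_forall_eq 0 fun x => Abelian.Ext.eq_zero_of_projective x

theorem ext1_zero (hS : S.ShortExact) [Projective S.X₂]
    (h : ∀ f : S.X₁ ⟶ Y, ∃ g : S.X₂ ⟶ Y, S.f ≫ g = f) :
    Subsingleton (Abelian.Ext.{0} S.X₃ Y 1) := by
  refine subsingleton_of_forall_eq 0 fun x => ?_
  obtain ⟨y, rfl⟩ := Abelian.Ext.contravariant_sequence_exact₃ hS Y x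
    (Abelian.Ext.eq_zero_of_projective _) (add_comm 1 0)
  obtain ⟨f, rfl⟩ := (Abelian.Ext.mk₀_bijective _ _).2 y
  obtain ⟨g, rfl⟩ := h f
  rw [← Abelian.Ext.mk₀_comp_mk₀, ← Abelian.Ext.comp_assoc (a₂₃ := 0) (a₁₂ := 1)]
  · rw [hS.extClass_comp, Abelian.Ext.zero_comp]
  all_goals simp

theorem ext1_conv (hS : S.ShortExact) (h : Subsingleton (Abelian.Ext.{0} S.X₃ Y 1))
    (f : S.X₁ ⟶ Y) : ∃ g : S.X₂ ⟶ Y, S.f ≫ g = f := by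
  obtain ⟨y, hy⟩ := Abelian.Ext.contravariant_sequence_exact₁ hS Y (Abelian.Ext.mk₀ f)
    (add_comm 1 0) (Subsingleton.elim _ _)
  obtain ⟨g, rfl⟩ := (Abelian.Ext.mk₀_bijective _ _).2 y
  refine ⟨g, ?_⟩
  rw [Abelian.Ext.mk₀_comp_mk₀] at hy
  exact (Abelian.Ext.mk₀_bijective _ _).1 hy

theorem kerSES {F M : Type} [AddCommGroup F] [Module R F] [AddCommGroup M] [Module R M]
    (q : F →ₗ[R] M) (hq : Function.Surjective q) : (q.shortComplexKer).ShortExact :=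
  LinearMap.shortExact_shortComplexKer hq

theorem flatExt {R : Type} [CommRing R] (N : Type) [AddCommGroup N] [Module R N]
    (hpi : PureInjective R N) (i : ℕ) : ∀ (M : Type) [AddCommGroup M] [Module R M]
    [Module.Flat R M], Subsingleton (Abelian.Ext.{0} (ModuleCat.of R M) (ModuleCat.of R N) (i+1)) := by
  have key : ∀ (M : Type) [AddCommGroup M] [Module R M] [Module.Flat R M],
      ∃ q : (M →₀ R) →ₗ[R] M, Function.Surjective q ∧
      ∀ (Q : Type) [AddCommGroup Q] [Module R Q],
        Function.Injective (LinearMap.lTensor Q (LinearMap.ker q).subtype) := by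
    intro M _ _ _
    refine ⟨Finsupp.linearCombination R id,
      Finsupp.linearCombination_surjective _ Function.surjective_id, ?_⟩
    intro Q _ _
    exact LinearMap.lTensor_injective_of_exact_of_flat _
      (Finsupp.linearCombination_surjective _ Function.surjective_id) _
      (Submodule.injective_subtype _) (LinearMap.exact_subtype_ker_map _) Q
  induction i with
  | zero =>
    intro M _ _ _
    obtain ⟨q, hq, hQ⟩ := key M
    have : Projective (q.shortComplexKer).X₂ := ModuleCat.projective_of_free (Module.Free.chooseBasis R (M →₀ R))
    refine ext1_zero _ (kerSES q hq) fun f => ?_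
    obtain ⟨g, hg⟩ := hpi _ _ (LinearMap.ker q).subtype ⟨Submodule.injective_subtype _, hQ⟩ f.hom
    exact ⟨ModuleCat.ofHom g, by ext1; exact hg⟩
  | succ i ih =>
    intro M _ _ _
    obtain ⟨q, hq, hQ⟩ := key M
    have : Projective (q.shortComplexKer).X₂ := ModuleCat.projective_of_free (Module.Free.chooseBasis R (M →₀ R))
    have : Module.Flat R (LinearMap.ker q) := by
      refine (Module.Flat.iff_rTensor_preserves_injective_linearMap (R := R) (M := LinearMap.ker q)).2 ?_
      intro P P' _ _ _ _ f hf
      have h1 := (Module.Flat.rTensor_preserves_injective_linearMap (M := (M →₀ R)) f hf).comp (hQ P)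
      have h2 : Function.Injective ((LinearMap.lTensor P' (LinearMap.ker q).subtype).comp
          (LinearMap.rTensor (LinearMap.ker q) f)) := by
        rw [LinearMap.lTensor_comp_rTensor, ← LinearMap.rTensor_comp_lTensor]
        exact h1
      rw [LinearMap.coe_comp] at h2
      exact h2.of_comp
    exact sesQuot _ (kerSES q hq) (i+1) (ih (LinearMap.ker q)) (extProj _ _)

end ses

structure ExtLike (A : Type) [CommRing A] [IsLocalRing A] (V : ModuleCat.{0} A → ℕ → Prop)
    (n : ℕ) : Prop where
  mid : ∀ {M₁ M₂ M₃ : Type} [AddCommGroup M₁] [Module A M₁] [AddCommGroup M₂] [Module A M₂]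
    [AddCommGroup M₃] [Module A M₃] (f : M₁ →ₗ[A] M₂) (g : M₂ →ₗ[A] M₃),
    Function.Injective f → Function.Exact f g → Function.Surjective g →
    ∀ i, V (ModuleCat.of A M₁) i → V (ModuleCat.of A M₃) i → V (ModuleCat.of A M₂) i
  sub : ∀ {M₁ M₂ M₃ : Type} [AddCommGroup M₁] [Module A M₁] [AddCommGroup M₂] [Module A M₂]
    [AddCommGroup M₃] [Module A M₃] (f : M₁ →ₗ[A] M₂) (g : M₂ →ₗ[A] M₃),
    Function.Injective f → Function.Exact f g → Function.Surjective g →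
    ∀ i, V (ModuleCat.of A M₂) i → V (ModuleCat.of A M₃) (i+1) → V (ModuleCat.of A M₁) i
  quot : ∀ {M₁ M₂ M₃ : Type} [AddCommGroup M₁] [Module A M₁] [AddCommGroup M₂] [Module A M₂]
    [AddCommGroup M₃] [Module A M₃] (f : M₁ →ₗ[A] M₂) (g : M₂ →ₗ[A] M₃),
    Function.Injective f → Function.Exact f g → Function.Surjective g →
    ∀ i, V (ModuleCat.of A M₁) i → V (ModuleCat.of A M₂) (i+1) → V (ModuleCat.of A M₃) (i+1)
  retract : ∀ {M₁ M₂ : Type} [AddCommGroup M₁] [Module A M₁] [AddCommGroup M₂] [Module A M₂]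
    (f : M₁ →ₗ[A] M₂) (g : M₂ →ₗ[A] M₁), g.comp f = LinearMap.id →
    ∀ i, V (ModuleCat.of A M₂) i → V (ModuleCat.of A M₁) i
  zero : ∀ (M : Type) [AddCommGroup M] [Module A M] [Subsingleton M] (i : ℕ), V (ModuleCat.of A M) i
  free : ∀ i, V (ModuleCat.of A A) (i+1)
  top : ∀ (M : Type) [AddCommGroup M] [Module A M] i, n < i → V (ModuleCat.of A M) i

namespace ExtLike

variable {A : Type} [CommRing A] [IsLocalRing A] {V : ModuleCat.{0} A → ℕ → Prop} {n : ℕ}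

theorem equiv (h : ExtLike A V n) {M₁ M₂ : Type} [AddCommGroup M₁] [Module A M₁]
    [AddCommGroup M₂] [Module A M₂] (e : M₁ ≃ₗ[A] M₂) (i : ℕ) (h1 : V (ModuleCat.of A M₂) i) :
    V (ModuleCat.of A M₁) i :=
  h.retract e.toLinearMap e.symm.toLinearMap (by ext; simp) i h1

theorem pi (h : ExtLike A V n) (M : Type) [AddCommGroup M] [Module A M] (i : ℕ)
    (hM : V (ModuleCat.of A M) i) (t : ℕ) : V (ModuleCat.of A (Fin t → M)) i := by
  induction t with
  | zero => exact h.zero _ i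
  | succ t ih =>
    refine h.equiv (Fin.consLinearEquiv A (fun _ : Fin (t+1) => M)).symm i ?_
    refine h.mid (LinearMap.inl A M (Fin t → M)) (LinearMap.snd A M (Fin t → M))
      LinearMap.inl_injective ?_ LinearMap.snd_surjective i hM ih
    exact Function.Exact.inl_snd

/-- modules on which the maximal ideal is stably zero -/
def StK (A : Type) [CommRing A] [IsLocalRing A] (M : Type) [AddCommGroup M] [Module A M] : Prop :=
  ∀ x ∈ IsLocalRing.maximalIdeal A, ∀ (F : Type) [AddCommGroup F] [Module A F] (q : F →ₗ[A] M),
    Function.Surjective q → ∃ t : M →ₗ[A] F, ∀ y, q (t y) = x • y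

theorem StK.step {M : Type} [AddCommGroup M] [Module A M] (hM : StK A M)
    {F : Type} [AddCommGroup F] [Module A F] (q : F →ₗ[A] M) (hq : Function.Surjective q)
    (x : A) (hx : x ∈ IsLocalRing.maximalIdeal A) :
    ∃ s : F →ₗ[A] LinearMap.ker q, ∀ y : LinearMap.ker q, s y = x • y := by
  obtain ⟨t, ht⟩ := hM x hx F q hq
  refine ⟨LinearMap.codRestrict _ (x • LinearMap.id - t.comp q) ?_, ?_⟩
  · intro c; simp [ht]
  · rintro ⟨y, hy⟩
    ext
    simp [LinearMap.mem_ker.1 hy]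

theorem StK.ker {M : Type} [AddCommGroup M] [Module A M] (hM : StK A M)
    {F : Type} [AddCommGroup F] [Module A F] [Module.Projective A F]
    (q : F →ₗ[A] M) (hq : Function.Surjective q) : StK A (LinearMap.ker q) := by
  intro x hx G _ _ r hr
  obtain ⟨s, hs⟩ := hM.step q hq x hx
  obtain ⟨u, hu⟩ := Module.projective_lifting_property r s hr
  refine ⟨u.comp (LinearMap.ker q).subtype, fun y => ?_⟩
  rw [← hs y, ← hu]; rfl

theorem dual_exact {M : Type} [AddCommGroup M] [Module A M]
    {F : Type} [AddCommGroup F] [Module A F] (q : F →ₗ[A] M) (hq : Function.Surjective q) :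
    Function.Exact q.dualMap ((LinearMap.ker q).subtype.dualMap.rangeRestrict) := by
  intro f
  constructor
  · intro hf
    have h0 : LinearMap.ker q ≤ LinearMap.ker f := by
      intro y hy
      have := congrArg (fun g => (g : Module.Dual A (LinearMap.ker q)) ⟨y, hy⟩)
        (congrArg Subtype.val hf)
      simpa using this
    refine ⟨((LinearMap.ker q).liftQ f h0).comp (q.quotKerEquivOfSurjective hq).symm.toLinearMap, ?_⟩
    ext y
    have : (q.quotKerEquivOfSurjective hq).symm (q y) = Submodule.Quotient.mk y := by
      rw [LinearEquiv.symm_apply_eq]; rfl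
    simp [this]
  · rintro ⟨g, rfl⟩
    ext y
    simp

/-- V of a finitely generated module killed by the maximal ideal. -/
theorem of_killed (h : ExtLike A V n) (K : Type) [AddCommGroup K] [Module A K] [Module.Finite A K]
    (hK : ∀ x ∈ IsLocalRing.maximalIdeal A, ∀ y : K, x • y = 0) :
    (∀ i, V (ModuleCat.of A (IsLocalRing.ResidueField A)) i → V (ModuleCat.of A K) i) ∧
    (Nontrivial K → ∀ i, V (ModuleCat.of A K) i →
      V (ModuleCat.of A (IsLocalRing.ResidueField A)) i) := by
  have hT : Module.IsTorsionBySet A K (IsLocalRing.maximalIdeal A) := by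
    intro y x; exact hK x.1 x.2 y
  let : Module (IsLocalRing.ResidueField A) K := hT.module
  have : IsScalarTower A (IsLocalRing.ResidueField A) K := hT.isScalarTower
  have : Module.Finite (IsLocalRing.ResidueField A) K :=
    Module.Finite.of_restrictScalars_finite A _ _
  let b := Module.finBasis (IsLocalRing.ResidueField A) K
  let e := b.equivFun.restrictScalars A
  constructor
  · intro i hi
    exact h.equiv e i (h.pi _ i hi _)
  · intro hn i hi
    have hpos : 0 < Module.finrank (IsLocalRing.ResidueField A) K := Module.finrank_pos
    have h1 : V (ModuleCat.of A (Fin (Module.finrank (IsLocalRing.ResidueField A) K) →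
      IsLocalRing.ResidueField A)) i := h.equiv e.symm i hi
    refine h.retract (LinearMap.single A (fun _ => IsLocalRing.ResidueField A) ⟨0, hpos⟩)
      (LinearMap.proj ⟨0, hpos⟩) ?_ i h1
    ext; simp

theorem high [IsNoetherianRing A] (h : ExtLike A V n) (s : ℕ) :
    ∀ (M : Type) [AddCommGroup M] [Module A M] [Module.Finite A M], StK A M → ∀ j, n < j + 1 + s →
      (∀ i, j + 2 < i → V (ModuleCat.of A (IsLocalRing.ResidueField A)) i) →
      V (ModuleCat.of A (Module.Dual A M)) (j+1) := by
  induction s with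
  | zero => intro M _ _ _ _ j hj _; exact h.top _ _ hj
  | succ s ih =>
    intro M _ _ _ hM j hj hk
    obtain ⟨t, q, hq⟩ := Module.Finite.exists_fin' A M
    have hinj : Function.Injective q.dualMap := LinearMap.dualMap_injective_of_surjective hq
    refine h.sub (M₃ := LinearMap.range (LinearMap.ker q).subtype.dualMap) q.dualMap ((LinearMap.ker q).subtype.dualMap.rangeRestrict) hinj
      (dual_exact q hq) (LinearMap.surjective_rangeRestrict _) (j+1) ?_ ?_
    · exact h.equiv (Module.piEquiv (Fin t) A A).symm _ (h.pi _ _ (h.free j) t)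
    · set B := LinearMap.range (LinearMap.ker q).subtype.dualMap with hB
      refine h.sub B.subtype B.mkQ B.injective_subtype
        (by rw [LinearMap.exact_iff]; simp) B.mkQ_surjective (j+1+1) ?_ ?_
      · exact ih (LinearMap.ker q) (hM.ker q hq) (j+1) (by omega) (fun i hi => hk i (by omega))
      · refine (h.of_killed _ ?_).1 _ (hk _ (by omega))
        intro x hx y
        obtain ⟨y, rfl⟩ := B.mkQ_surjective y
        rw [← map_smul, Submodule.mkQ_apply, Submodule.Quotient.mk_eq_zero]
        obtain ⟨s, hs⟩ := hM.step q hq x hx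
        refine ⟨y.comp s, ?_⟩
        ext c
        simp [hs]

theorem main0 [IsNoetherianRing A] (h : ExtLike A V n) (M : Type) [AddCommGroup M] [Module A M]
    [Module.Finite A M] (hM : StK A M) (B : Submodule A (Module.Dual A M))
    (hB : ∀ x ∈ IsLocalRing.maximalIdeal A, ∀ y : Module.Dual A M, x • y ∈ B) (c : ℕ)
    (hc : ∀ j, c ≤ j → V (ModuleCat.of A B) j) (hne : B ≠ ⊤) :
    ∀ j, c < j → V (ModuleCat.of A (IsLocalRing.ResidueField A)) j := by
  suffices H : ∀ s j, c < j → n < j + s → V (ModuleCat.of A (IsLocalRing.ResidueField A)) j by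
    intro j hj; exact H (n+1) j hj (by omega)
  intro s
  induction s with
  | zero => intro j _ hj; exact h.top _ _ hj
  | succ s ih =>
    intro j hj hjs
    obtain ⟨j, rfl⟩ : ∃ i, j = i + 1 := ⟨j - 1, by omega⟩
    have hkill := h.of_killed (Module.Dual A M ⧸ B) (by
      intro x hx y
      obtain ⟨y, rfl⟩ := B.mkQ_surjective y
      rw [← map_smul, Submodule.mkQ_apply, Submodule.Quotient.mk_eq_zero]
      exact hB x hx y)
    refine hkill.2 (Submodule.Quotient.nontrivial_iff.2 hne) _ ?_
    refine h.quot B.subtype B.mkQ B.injective_subtype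
        (by rw [LinearMap.exact_iff]; simp) B.mkQ_surjective j (hc j (by omega)) ?_
    exact h.high (n+1) M hM j (by omega) (fun i hi => ih i (by omega) (by omega))

theorem main1 [IsNoetherianRing A] (h : ExtLike A V n) (r : ℕ) :
    ∀ (M : Type) [AddCommGroup M] [Module A M]
    [Module.Finite A M] (_ : StK A M) (B : Submodule A (Module.Dual A M))
    (_ : ∀ x ∈ IsLocalRing.maximalIdeal A, ∀ y : Module.Dual A M, x • y ∈ B) (c : ℕ)
    (_ : ∀ j, c ≤ j → V (ModuleCat.of A B) j) (_ : r = 0 → B ≠ ⊤) (_ : 0 < r → B = ⊤)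
    (_ : ∀ i, i + 1 < r →
      Subsingleton (Abelian.Ext.{0} (ModuleCat.of A M) (ModuleCat.of A A) (i+1)))
    (_ : 0 < r → ¬ Subsingleton (Abelian.Ext.{0} (ModuleCat.of A M) (ModuleCat.of A A) r)),
    ∀ j, c + r < j → V (ModuleCat.of A (IsLocalRing.ResidueField A)) j := by
  induction r with
  | zero =>
    intro M _ _ _ hM B hB c hc hne _ _ _
    exact h.main0 M hM B hB c hc (hne rfl)
  | succ r ih =>
    intro M _ _ _ hM B hB c hc _ htop hlow hr j hj
    obtain ⟨t, q, hq⟩ := Module.Finite.exists_fin' A M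
    have hBtop := htop (by omega)
    have hinj : Function.Injective q.dualMap := LinearMap.dualMap_injective_of_surjective hq
    have hproj : Projective (q.shortComplexKer).X₂ :=
      ModuleCat.projective_of_free (Module.Free.chooseBasis A (Fin t → A))
    refine ih (LinearMap.ker q) (hM.ker q hq) (LinearMap.range (LinearMap.ker q).subtype.dualMap)
      ?_ (c+1) ?_ ?_ ?_ ?_ ?_ j (by omega)
    · intro x hx y
      obtain ⟨s, hs⟩ := hM.step q hq x hx
      refine ⟨y.comp s, ?_⟩
      ext c
      simp [hs]
    · intro j hj
      obtain ⟨j, rfl⟩ : ∃ i, j = i + 1 := ⟨j - 1, by omega⟩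
      refine h.quot q.dualMap ((LinearMap.ker q).subtype.dualMap.rangeRestrict) hinj
        (dual_exact q hq) (LinearMap.surjective_rangeRestrict _) j ?_ ?_
      · refine h.equiv ((LinearEquiv.ofTop B hBtop).symm) j (hc j (by omega))
      · exact h.equiv (Module.piEquiv (Fin t) A A).symm _ (h.pi _ _ (h.free j) t)
    · rintro rfl hB'
      refine hr (by omega) (ext1_zero _ (kerSES q hq) fun f => ?_)
      have : f.hom ∈ LinearMap.range (LinearMap.ker q).subtype.dualMap := by rw [hB']; trivial
      obtain ⟨g, hg⟩ := this
      exact ⟨ModuleCat.ofHom g, by ext1; exact hg⟩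
    · intro hr0
      rw [eq_top_iff]
      intro f _
      obtain ⟨g, hg⟩ := ext1_conv (ModuleCat.of A A) (kerSES q hq) (hlow 0 (by omega))
        (ModuleCat.ofHom f)
      exact ⟨g.hom, congrArg ModuleCat.Hom.hom hg⟩
    · intro i hi
      exact sesSub _ (kerSES q hq) (i+1) (extProj _ _) (hlow (i+1) (by omega))
    · intro hr0 hs
      obtain ⟨r, rfl⟩ : ∃ i, r = i + 1 := ⟨r - 1, by omega⟩
      exact hr (by omega) (sesQuot _ (kerSES q hq) (r+1) hs (extProj _ _))

theorem main2 [IsNoetherianRing A] (h : ExtLike A V n) (j : ℕ) (hj : rdepth A A < (j : ℕ∞)) :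
    V (ModuleCat.of A (IsLocalRing.ResidueField A)) j := by
  classical
  have hex : ∃ i : ℕ, ¬ extV A (ModuleCat.of A (IsLocalRing.ResidueField A)) (ModuleCat.of A A) i := by
    obtain ⟨_, ⟨i, rfl, hi⟩, _⟩ := sInf_lt_iff.1 hj
    exact ⟨i, hi⟩
  have hdj : Nat.find hex < j := by
    obtain ⟨_, ⟨i, rfl, hi⟩, hij⟩ := sInf_lt_iff.1 hj
    exact lt_of_le_of_lt (Nat.find_min' hex hi) (by exact_mod_cast hij)
  have hd := Nat.find_spec hex
  have hmin := fun i (hi : i < Nat.find hex) => not_not.1 (Nat.find_min hex hi)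
  generalize Nat.find hex = d at *
  have hres : ∀ x ∈ IsLocalRing.maximalIdeal A, ∀ y : IsLocalRing.ResidueField A, x • y = 0 := by
    intro x hx y
    rw [Algebra.smul_def]
    have : algebraMap A (IsLocalRing.ResidueField A) x = 0 := by
      simpa using hx
    rw [this, zero_mul]
  have hz : Subsingleton (Module.Dual A (IsLocalRing.ResidueField A)) ↔
      extV A (ModuleCat.of A (IsLocalRing.ResidueField A)) (ModuleCat.of A A) 0 := by
    rw [extV_iff_zero]
    exact (ModuleCat.homEquiv (M := ModuleCat.of A (IsLocalRing.ResidueField A))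
      (N := ModuleCat.of A A)).symm.subsingleton_congr
  refine h.main1 d (IsLocalRing.ResidueField A) ?_ ⊥ ?_ 0 ?_ ?_ ?_ ?_ ?_ j (by omega)
  · intro x hx F _ _ q hq
    exact ⟨0, fun y => by simp [hres x hx y]⟩
  · intro x hx y
    rw [Submodule.mem_bot]
    ext c
    rw [LinearMap.smul_apply, ← map_smul, hres x hx, map_zero, LinearMap.zero_apply]
  · intro j _
    exact h.zero _ _
  · rintro rfl hbt
    exact hd (hz.1 ((Submodule.subsingleton_iff A).1 (subsingleton_of_bot_eq_top hbt)))
  · intro h0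
    haveI := hz.2 (hmin 0 h0)
    exact Subsingleton.elim _ _
  · intro i hi
    exact (extV_iff_succ _ _ _ _).1 (hmin (i+1) hi)
  · intro h0 hs
    exact hd ((extV_iff _ _ _ _).2 hs)

end ExtLike

theorem restrSES {R A : Type} [CommRing R] [CommRing A] [Algebra R A]
    {M₁ M₂ M₃ : Type} [AddCommGroup M₁] [Module A M₁] [AddCommGroup M₂] [Module A M₂]
    [AddCommGroup M₃] [Module A M₃] (f : M₁ →ₗ[A] M₂) (g : M₂ →ₗ[A] M₃)
    (hf : Function.Injective f) (hfg : Function.Exact f g) (hg : Function.Surjective g) :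
    ∃ (S : ShortComplex (ModuleCat.{0} R)), S.ShortExact ∧
      S.X₁ = (ModuleCat.restrictScalars (algebraMap R A)).obj (ModuleCat.of A M₁) ∧
      S.X₂ = (ModuleCat.restrictScalars (algebraMap R A)).obj (ModuleCat.of A M₂) ∧
      S.X₃ = (ModuleCat.restrictScalars (algebraMap R A)).obj (ModuleCat.of A M₃) := by
  let T : ShortComplex (ModuleCat.{0} R) := ShortComplex.mk
    ((ModuleCat.restrictScalars (algebraMap R A)).map (ModuleCat.ofHom f))
    ((ModuleCat.restrictScalars (algebraMap R A)).map (ModuleCat.ofHom g)) (by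
      rw [← Functor.map_comp, ← ModuleCat.ofHom_comp, hfg.linearMap_comp_eq_zero]
      rfl)
  refine ⟨T, ?_, rfl, rfl, rfl⟩
  refine { exact := ?_, mono_f := ?_, epi_g := ?_ }
  · rw [ShortComplex.ShortExact.moduleCat_exact_iff_function_exact]
    exact hfg
  · rw [ModuleCat.mono_iff_injective]; exact hf
  · rw [ModuleCat.epi_iff_surjective]; exact hg

theorem restrIso (R A : Type) [CommRing R] [CommRing A] [Algebra R A] (X : Type) [AddCommGroup X]
    [Module A X] [Module R X] [IsScalarTower R A X] :
    ∃ (f : ModuleCat.of R X ⟶ (ModuleCat.restrictScalars (algebraMap R A)).obj (ModuleCat.of A X))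
      (g : (ModuleCat.restrictScalars (algebraMap R A)).obj (ModuleCat.of A X) ⟶ ModuleCat.of R X),
      f ≫ g = 𝟙 _ ∧ g ≫ f = 𝟙 _ := by
  refine ⟨ModuleCat.ofHom
      (Y := ((ModuleCat.restrictScalars (algebraMap R A)).obj (ModuleCat.of A X)))
      { toFun := fun y => y, map_add' := fun _ _ => rfl, map_smul' := ?_ },
    ModuleCat.ofHom
      (X := ((ModuleCat.restrictScalars (algebraMap R A)).obj (ModuleCat.of A X)))
      { toFun := fun y => y, map_add' := fun _ _ => rfl, map_smul' := ?_ }, rfl, rfl⟩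
  · intro r y
    exact (algebraMap_smul A r y).symm
  · intro r y
    exact (algebraMap_smul A r (show X from y))

theorem extLike_of (R A : Type) [CommRing R] [CommRing A] [IsLocalRing A] [Algebra R A]
    [Module.Flat R A] (N : Type) [AddCommGroup N] [Module R N]
    (hpi : PureInjective R N) (n : ℕ) (hn : injDimLE R (ModuleCat.of R N) n) :
    ExtLike A (fun X i => Subsingleton (Abelian.Ext.{0}
      ((ModuleCat.restrictScalars (algebraMap R A)).obj X) (ModuleCat.of R N) i)) n where
  mid f g hf hfg hg i := by
    obtain ⟨S, hS, h1, h2, h3⟩ := restrSES (R := R) f g hf hfg hg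
    rw [← h1, ← h2, ← h3]
    exact sesMid _ hS i
  sub f g hf hfg hg i := by
    obtain ⟨S, hS, h1, h2, h3⟩ := restrSES (R := R) f g hf hfg hg
    rw [← h1, ← h2, ← h3]
    exact sesSub _ hS i
  quot f g hf hfg hg i := by
    obtain ⟨S, hS, h1, h2, h3⟩ := restrSES (R := R) f g hf hfg hg
    rw [← h1, ← h2, ← h3]
    exact sesQuot _ hS i
  retract f g hfg i := by
    refine extRetract _ ((ModuleCat.restrictScalars (algebraMap R A)).map (ModuleCat.ofHom f))
      ((ModuleCat.restrictScalars (algebraMap R A)).map (ModuleCat.ofHom g)) ?_ i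
    rw [← Functor.map_comp, ← ModuleCat.ofHom_comp, hfg]
    rfl
  zero M _ _ hM i := by
    refine subsingleton_of_forall_eq 0 fun x => ?_
    have hz : 𝟙 ((ModuleCat.restrictScalars (algebraMap R A)).obj (ModuleCat.of A M)) = 0 := by
      ext y
      exact Subsingleton.elim (α := M) _ _
    rw [← Abelian.Ext.mk₀_id_comp x, hz, Abelian.Ext.mk₀_zero, Abelian.Ext.zero_comp]
  free i := by
    obtain ⟨f, g, -, h2⟩ := restrIso R A A
    exact extRetract _ g f h2 (i+1) (flatExt N hpi i A)
  top M _ _ i hi := (extV_iff _ _ _ _).1 (hn _ i hi)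

/-- over a commutative noetherian local ring `R`, a pure-injective module
`N` of finite injective dimension satisfies `Ext^j_R(k(p), N) = 0` for every prime `p`
and every `j > depth(R_p)`. -/
theorem stmt13 (R : Type) [CommRing R] [IsNoetherianRing R] [IsLocalRing R]
    (N : Type) [AddCommGroup N] [Module R N]
    (hpi : PureInjective R N) (hfid : ∃ n : ℕ, injDimLE R (ModuleCat.of R N) n) :
    ∀ (p : PrimeSpectrum R) (j : ℕ), ringDepthAt R p < (j : ℕ∞) →
      extV R (ModuleCat.of R (resField R p)) (ModuleCat.of R N) j := by
  intro p j hj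
  obtain ⟨n, hn⟩ := hfid
  let A := Localization.AtPrime p.asIdeal
  have h := extLike_of R A N hpi n hn
  have h1 := h.main2 j hj
  rw [extV_iff]
  let e1 : resField R p ≃ₗ[R] A ⧸ (Submodule.localized' A p.asIdeal.primeCompl
      (Algebra.linearMap R A) p.asIdeal) :=
    IsLocalizedModule.iso p.asIdeal.primeCompl
      (Submodule.toLocalizedQuotient' A p.asIdeal.primeCompl (Algebra.linearMap R A) p.asIdeal)
  have hmax : (Submodule.localized' A p.asIdeal.primeCompl
      (Algebra.linearMap R A) p.asIdeal) = IsLocalRing.maximalIdeal A := by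
    rw [Ideal.localized'_eq_map]
    exact Localization.AtPrime.map_eq_maximalIdeal
  let e2 := (Submodule.quotEquivOfEq _ _ hmax).restrictScalars R
  let e : resField R p ≃ₗ[R] (A ⧸ IsLocalRing.maximalIdeal A) := e1.trans e2
  obtain ⟨f, g, h2, -⟩ := restrIso R A (A ⧸ IsLocalRing.maximalIdeal A)
  have h3 := extRetract _ f g h2 j h1
  refine extRetract _ (ModuleCat.ofHom e.toLinearMap) (ModuleCat.ofHom e.symm.toLinearMap) ?_ j h3
  rw [← ModuleCat.ofHom_comp, LinearEquiv.comp_coe, LinearEquiv.self_trans_symm]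
  rfl
end
end
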